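/- arXiv:2105.06126 — 3 statements merged into one kernel-verified Lean document; each statement's English description precedes it below -/
import Mathlib

section
/- (Existence of lacing values.) Let Z : Ω → ℝ^{d_z} be a measurable random variable on a probability space (Ω, P), let D_z ⊆ ℝ^{d_z} be a nonempty compact set with P {Z ∈ D_z} = 1, and let l, u : ℝ^{d_z} → ℝ be continuous functions with l(z) ≤ u(z) for all z ∈ D_z. Then for every risk level α ∈ (0,1) there exists a lacing value z ∈ D_z, i.e., a point z ∈ D_z satisfying l(z) ≤ VaR_α(l(Z)) and VaR_α(u(Z)) ≤ u(z). -/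
open MeasureTheory Set

/-- Value-at-risk of a real random variable `X` at level `α`. -/
noncomputable def VaR {Ω : Type*} [MeasurableSpace Ω] (P : Measure Ω)
    (X : Ω → ℝ) (α : ℝ) : ℝ :=
  sInf {w : ℝ | ENNReal.ofReal α ≤ P {ω | X ω ≤ w}}

/-!
Right-continuity of distribution functions makes `VaR_α(X) ≤ w` equivalent to `α ≤ P {X ≤ w}`.
Hence with `a = VaR_α(l(Z))` the compact set `K ∩ {l ≤ a}` has probability at least `α`. A point `z`
of it where `u` is maximal satisfies `l z ≤ a`, and `{u(Z) ≤ u z}` has probability at least `α`, so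
`VaR_α(u(Z)) ≤ u z`.
-/

open Filter Topology
open scoped ENNReal

section DistributionFunction

variable {β : Type*} [MeasurableSpace β] {μ : Measure β} {c : ℝ≥0∞}

theorem nonempty_setOf_le_measure_Iic [LinearOrder β] [(atTop : Filter β).IsCountablyGenerated]
    [Nonempty β] (hc : c < μ univ) : {x | c ≤ μ (Iic x)}.Nonempty := by
  obtain ⟨x, hx⟩ := ((tendsto_measure_Iic_atTop μ).eventually_const_lt hc).exists
  exact ⟨x, hx.le⟩

variable [TopologicalSpace β] [OpensMeasurableSpace β] [IsFiniteMeasure μ]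

variable (μ) in
theorem tendsto_measure_Iic_atBot [Preorder β] [ClosedIicTopology β] [NoMinOrder β]
    [(atBot : Filter β).IsCountablyGenerated] [Nonempty β] :
    Tendsto (fun x ↦ μ (Iic x)) atBot (𝓝 0) := by
  have h_inter : ⋂ x : β, Iic x = ∅ := by
    refine eq_empty_of_forall_notMem fun y hy ↦ ?_
    obtain ⟨x, hxy⟩ := exists_lt y
    exact hxy.not_ge (mem_iInter.1 hy x)
  rw [← measure_empty (μ := μ), ← h_inter]
  exact tendsto_measure_iInter_atBot (fun _ ↦ measurableSet_Iic.nullMeasurableSet)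
    monotone_Iic ⟨Classical.arbitrary β, measure_ne_top _ _⟩

variable (μ) in
theorem tendsto_measure_Iic_nhdsGT [LinearOrder β] [OrderTopology β] [FirstCountableTopology β]
    [DenselyOrdered β] [NoMaxOrder β] (a : β) :
    Tendsto (fun x ↦ μ (Iic x)) (𝓝[>] a) (𝓝 (μ (Iic a))) := by
  have h_inter : ⋂ x > a, Iic x = Iic a := by
    ext y
    simp only [mem_iInter, mem_Iic]
    exact forall_gt_imp_ge_iff_le_of_dense
  obtain ⟨b, hb⟩ := exists_gt a
  rw [← h_inter]
  exact tendsto_measure_biInter_gt (fun _ _ ↦ measurableSet_Iic.nullMeasurableSet)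
    (fun _ _ _ h ↦ Iic_subset_Iic.2 h) ⟨b, hb, measure_ne_top _ _⟩

theorem bddBelow_setOf_le_measure_Iic [LinearOrder β] [ClosedIicTopology β] [NoMinOrder β]
    [(atBot : Filter β).IsCountablyGenerated] [Nonempty β] (hc : 0 < c) :
    BddBelow {x | c ≤ μ (Iic x)} := by
  obtain ⟨b, hb⟩ := ((tendsto_measure_Iic_atBot μ).eventually_lt_const hc).exists
  refine ⟨b, fun x hx ↦ le_of_not_gt fun hxb ↦ hb.not_ge ?_⟩
  exact hx.trans (measure_mono (Iic_subset_Iic.2 hxb.le))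

variable [ConditionallyCompleteLinearOrder β] [OrderTopology β] [SecondCountableTopology β]
  [DenselyOrdered β] [NoMaxOrder β]

theorem le_measure_Iic_sInf (hc : c < μ univ) : c ≤ μ (Iic (sInf {x | c ≤ μ (Iic x)})) := by
  have : Nonempty β := ⟨sInf ∅⟩
  refine ge_of_tendsto (tendsto_measure_Iic_nhdsGT μ _) ?_
  filter_upwards [self_mem_nhdsWithin] with y hy
  obtain ⟨x, hx, hxy⟩ := exists_lt_of_csInf_lt (nonempty_setOf_le_measure_Iic hc) hy
  exact le_trans hx (measure_mono (Iic_subset_Iic.2 hxy.le))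

theorem sInf_setOf_le_measure_Iic_le_iff [NoMinOrder β] (hc₀ : 0 < c) (hc : c < μ univ) {w : β} :
    sInf {x | c ≤ μ (Iic x)} ≤ w ↔ c ≤ μ (Iic w) := by
  have : Nonempty β := ⟨w⟩
  exact ⟨fun h ↦ (le_measure_Iic_sInf hc).trans (measure_mono (Iic_subset_Iic.2 h)),
    fun h ↦ csInf_le (bddBelow_setOf_le_measure_Iic hc₀) h⟩

end DistributionFunction

section ValueAtRisk

variable {Ω : Type*} [MeasurableSpace Ω] {P : Measure Ω} {α : ℝ}

theorem VaR_eq_sInf_map {X : Ω → ℝ} (hX : AEMeasurable X P) :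
    VaR P X α = sInf {w | ENNReal.ofReal α ≤ P.map X (Iic w)} := by
  simp only [VaR, Measure.map_apply_of_aemeasurable hX measurableSet_Iic, preimage, mem_Iic]

theorem VaR_le_iff [IsProbabilityMeasure P] {X : Ω → ℝ} (hX : AEMeasurable X P)
    (hα : α ∈ Ioo (0 : ℝ) 1) {w : ℝ} :
    VaR P X α ≤ w ↔ ENNReal.ofReal α ≤ P {ω | X ω ≤ w} := by
  have : IsProbabilityMeasure (P.map X) := Measure.isProbabilityMeasure_map hX
  have hα₁ : ENNReal.ofReal α < P.map X univ := by simpa using hα.2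
  rw [VaR_eq_sInf_map hX, sInf_setOf_le_measure_Iic_le_iff (ENNReal.ofReal_pos.2 hα.1) hα₁,
    Measure.map_apply_of_aemeasurable hX measurableSet_Iic]
  rfl

theorem stmt7_general [IsProbabilityMeasure P] {E : Type*} [TopologicalSpace E]
    [MeasurableSpace E] [OpensMeasurableSpace E] {Z : Ω → E} (hZ : AEMeasurable Z P)
    {K : Set E} (hK : IsCompact K) (hZK : ∀ᵐ ω ∂P, Z ω ∈ K) {l u : E → ℝ}
    (hl : LowerSemicontinuous l) (hu : UpperSemicontinuous u) (hα : α ∈ Ioo (0 : ℝ) 1) :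
    ∃ z ∈ K, l z ≤ VaR P (fun ω ↦ l (Z ω)) α ∧ VaR P (fun ω ↦ u (Z ω)) α ≤ u z := by
  set a := VaR P (fun ω ↦ l (Z ω)) α
  have h_sublevel : ENNReal.ofReal α ≤ P {ω | Z ω ∈ K ∩ l ⁻¹' Iic a} := by
    refine ((VaR_le_iff (hl.measurable.comp_aemeasurable hZ) hα).1 le_rfl).trans
      (measure_mono_ae ?_)
    filter_upwards [hZK] with ω hωK hωl using ⟨hωK, hωl⟩
  have h_nonempty : (K ∩ l ⁻¹' Iic a).Nonempty := by
    obtain ⟨ω, hω⟩ := nonempty_of_measure_ne_zero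
      ((ENNReal.ofReal_pos.2 hα.1).trans_le h_sublevel).ne'
    exact ⟨Z ω, hω⟩
  obtain ⟨z, ⟨hzK, hzl⟩, hz_max⟩ := (hu.upperSemicontinuousOn _).exists_isMaxOn h_nonempty
    (hK.inter_right (hl.isClosed_preimage a))
  refine ⟨z, hzK, hzl, (VaR_le_iff (hu.measurable.comp_aemeasurable hZ) hα).2 ?_⟩
  exact h_sublevel.trans (measure_mono fun ω hω ↦ hz_max hω)

end ValueAtRisk

/-- Existence of lacing values. -/
theorem stmt7 {Ω : Type*} [MeasurableSpace Ω] (P : Measure Ω)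
    [IsProbabilityMeasure P] {dz : ℕ} (Z : Ω → (Fin dz → ℝ)) (hZ : Measurable Z)
    (Dz : Set (Fin dz → ℝ)) (hDz_ne : Dz.Nonempty) (hDz_cpt : IsCompact Dz)
    (hDz_prob : P {ω | Z ω ∈ Dz} = 1)
    (l u : (Fin dz → ℝ) → ℝ) (hl : Continuous l) (hu : Continuous u)
    (hlu : ∀ z ∈ Dz, l z ≤ u z)
    (α : ℝ) (hα : α ∈ Set.Ioo (0 : ℝ) 1) :
    ∃ z ∈ Dz, l z ≤ VaR P (fun ω => l (Z ω)) α ∧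
      VaR P (fun ω => u (Z ω)) α ≤ u z :=
  stmt7_general hZ.aemeasurable hDz_cpt
    ((mem_ae_iff_prob_eq_one (hZ hDz_cpt.measurableSet)).2 hDz_prob)
    hl.lowerSemicontinuous hu.upperSemicontinuous hα
end

section
/- Let W : Ω → ℝ^{d_w} be a measurable random variable on a probability space (Ω, P), let D ⊆ ℝ^{d_w} be a closed set with P {W ∈ D} = 1 such that every open set U ⊆ ℝ^{d_w} with U ∩ D nonempty satisfies P {W ∈ U} > 0 (i.e., D is the support of W), and let h : ℝ^{d_w} → ℝ be continuous. Suppose w_min ∈ D satisfies h(w_min) ≤ h(w) for all w ∈ D (h attains its minimum over D at w_min). Then VaR_α(h(W)) tends to h(w_min) as α → 0 from the right: the function α ↦ VaR_α(h(W)) tends to h(w_min) along the filter of neighborhoods of 0 within (0, ∞). -/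
open MeasureTheory Set Filter Topology

/-!
As `α` decreases to `0`, the value-at-risk of `X` decreases to the essential infimum of `X`: a
threshold below the essential infimum has CDF value `0 < α`, whereas a threshold above it has a
positive CDF value, which dominates every small enough `α`. For `X = h(W)` the essential infimum is
the infimum of `h` over the support of `W`, because upper semicontinuity spreads a value of `h`
close to the infimum to a neighbourhood, which is charged by the law of `W`.
-/

section VaR

variable {Ω : Type*} [MeasurableSpace Ω] {P : Measure Ω} {X : Ω → ℝ} {c : ℝ}

lemma measure_le_eq_zero_of_ae_le {t : ℝ} (hc : ∀ᵐ ω ∂P, c ≤ X ω) (ht : t < c) :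
    P {ω | X ω ≤ t} = 0 :=
  measure_eq_zero_iff_ae_notMem.2 <| hc.mono fun _ hω => not_le.2 (ht.trans_le hω)

lemma VaR_mem_Icc {α t : ℝ} (hc : ∀ᵐ ω ∂P, c ≤ X ω) (hα : 0 < α)
    (ht : ENNReal.ofReal α ≤ P {ω | X ω ≤ t}) : VaR P X α ∈ Icc c t := by
  have lower_bound : c ∈ lowerBounds {w : ℝ | ENNReal.ofReal α ≤ P {ω | X ω ≤ w}} := by
    intro w hw
    by_contra! hwc
    have hpos : 0 < P {ω | X ω ≤ w} := (ENNReal.ofReal_pos.2 hα).trans_le hw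
    exact hpos.ne' (measure_le_eq_zero_of_ae_le hc hwc)
  exact ⟨le_csInf ⟨t, ht⟩ lower_bound, csInf_le ⟨c, lower_bound⟩ ht⟩

lemma eventually_VaR_mem_Icc {t : ℝ} (hc : ∀ᵐ ω ∂P, c ≤ X ω) (ht : 0 < P {ω | X ω ≤ t}) :
    ∀ᶠ α in 𝓝[>] 0, VaR P X α ∈ Icc c t := by
  have ofReal_tendsto : Tendsto ENNReal.ofReal (𝓝[>] 0) (𝓝 0) := by
    simpa only [ENNReal.ofReal_zero] using
      (ENNReal.continuous_ofReal.tendsto 0).mono_left nhdsWithin_le_nhds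
  filter_upwards [self_mem_nhdsWithin, ofReal_tendsto.eventually_le_const ht] with α hα hαt
  exact VaR_mem_Icc hc hα hαt

theorem tendsto_VaR_nhdsGT_zero (hc : ∀ᵐ ω ∂P, c ≤ X ω)
    (hpos : ∀ t, c < t → 0 < P {ω | X ω ≤ t}) : Tendsto (VaR P X) (𝓝[>] 0) (𝓝 c) := by
  refine tendsto_order.2 ⟨fun a hac => ?_, fun b hcb => ?_⟩
  · filter_upwards [eventually_VaR_mem_Icc hc (hpos (c + 1) (lt_add_one c))] with α hα
    exact hac.trans_le hα.1
  · obtain ⟨t, hct, htb⟩ := exists_between hcb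
    filter_upwards [eventually_VaR_mem_Icc hc (hpos t hct)] with α hα
    exact hα.2.trans_lt htb

end VaR

lemma measure_comp_le_pos_of_upperSemicontinuousAt {Ω E : Type*} [MeasurableSpace Ω]
    [TopologicalSpace E] {P : Measure Ω} {W : Ω → E} {h : E → ℝ} {w : E} {t : ℝ}
    (hw : ∀ U, IsOpen U → w ∈ U → 0 < P {ω | W ω ∈ U}) (hh : UpperSemicontinuousAt h w)
    (ht : h w < t) : 0 < P {ω | h (W ω) ≤ t} := by
  obtain ⟨U, hUt, hU, hwU⟩ := eventually_nhds_iff.1 (hh t ht)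
  exact (hw U hU hwU).trans_le (measure_mono fun ω hω => (hUt (W ω) hω).le)

theorem stmt12_general {Ω E : Type*} [MeasurableSpace Ω] [TopologicalSpace E] (P : Measure Ω)
    (W : Ω → E) (D : Set E) (hD_ae : ∀ᵐ ω ∂P, W ω ∈ D)
    (hD_supp : ∀ U : Set E, IsOpen U → (U ∩ D).Nonempty → 0 < P {ω | W ω ∈ U})
    (h : E → ℝ) (hh : ∀ w ∈ D, UpperSemicontinuousAt h w) (c : ℝ) (hc : IsGLB (h '' D) c) :
    Tendsto (fun α => VaR P (fun ω => h (W ω)) α) (𝓝[>] 0) (𝓝 c) := by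
  refine tendsto_VaR_nhdsGT_zero
    (hD_ae.mono fun ω hω => hc.1 (mem_image_of_mem h hω)) fun t hct => ?_
  obtain ⟨_, ⟨w, hwD, rfl⟩, -, hwt⟩ := hc.exists_between hct
  exact measure_comp_le_pos_of_upperSemicontinuousAt
    (fun U hU hwU => hD_supp U hU ⟨w, hwU, hwD⟩) (hh w hwD) hwt

theorem stmt12 {Ω : Type*} [MeasurableSpace Ω] (P : Measure Ω)
    [IsProbabilityMeasure P] {dw : ℕ} (W : Ω → (Fin dw → ℝ)) (hW : Measurable W)
    (D : Set (Fin dw → ℝ)) (hD_closed : IsClosed D) (hD_prob : P {ω | W ω ∈ D} = 1)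
    (hD_supp : ∀ U : Set (Fin dw → ℝ), IsOpen U → (U ∩ D).Nonempty →
      0 < P {ω | W ω ∈ U})
    (h : (Fin dw → ℝ) → ℝ) (hh : Continuous h)
    (wmin : Fin dw → ℝ) (hwmin : wmin ∈ D) (hmin : ∀ w ∈ D, h wmin ≤ h w) :
    Filter.Tendsto (fun α => VaR P (fun ω => h (W ω)) α)
      (nhdsWithin 0 (Set.Ioi 0)) (nhds (h wmin)) :=
  have hleast : IsLeast (h '' D) (h wmin) := ⟨mem_image_of_mem h hwmin, forall_mem_image.2 hmin⟩
  stmt12_general P W D ((mem_ae_iff_prob_eq_one (hW hD_closed.measurableSet)).2 hD_prob) hD_supp h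
    (fun _ _ => hh.upperSemicontinuous.upperSemicontinuousAt _) (h wmin) hleast.isGLB
end

section
/- Let Z : Ω → ℝ^{d_z} be a measurable random variable on a probability space (Ω, P), let D_z ⊆ ℝ^{d_z} be a nonempty compact set with P {Z ∈ D_z} = 1 such that every open set U ⊆ ℝ^{d_z} with U ∩ D_z nonempty satisfies P {Z ∈ U} > 0 (i.e., D_z is the support of Z), and let f : ℝ^{d_x} × ℝ^{d_z} → ℝ be continuous. Then for every x ∈ ℝ^{d_x}, the value-at-risk of f(x, Z) converges, as the risk level α → 0 from the right, to the worst-case value min_{z ∈ D_z} f(x, z): the function α ↦ VaR_α(f(x, Z)) tends to sInf { f(x, z) | z ∈ D_z } along the filter of neighborhoods of 0 within (0, ∞). Consequently, adversarially robust optimization argmax_x min_{z ∈ D_z} f(x,z) coincides with argmax_x lim_{α→0⁺} VaR_α(f(x, Z)). -/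
open MeasureTheory Set Filter Topology

/-!
If `X` is essentially bounded below, its value-at-risk tends to `essInf X` as `α → 0⁺`: the event
`X ≤ w` is null for `w < essInf X`, while for `w > essInf X` it has positive probability, hence
eventually at least `α`. If `X = g ∘ Z` with `g` upper semicontinuous, the open sets `{g < c}` are
charged by the law of `Z` as soon as they meet its support, so the essential infimum is the infimum
of `g` there.
-/

section VaR

variable {Ω : Type*} [MeasurableSpace Ω] {P : Measure Ω} {X : Ω → ℝ}

lemma essInf_le_of_measure_le_pos {w : ℝ} (hX : IsBoundedUnder (· ≥ ·) (ae P) X)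
    (hw : 0 < P {ω | X ω ≤ w}) : essInf X P ≤ w :=
  liminf_le_of_frequently_le (frequently_ae_iff.2 hw.ne') hX

lemma VaR_mem_Icc_essInf {α w : ℝ} (hX : IsBoundedUnder (· ≥ ·) (ae P) X) (hα : 0 < α)
    (hw : ENNReal.ofReal α ≤ P {ω | X ω ≤ w}) : VaR P X α ∈ Icc (essInf X P) w := by
  have hlower : essInf X P ∈ lowerBounds {w : ℝ | ENNReal.ofReal α ≤ P {ω | X ω ≤ w}} :=
    fun _ hv => essInf_le_of_measure_le_pos hX ((ENNReal.ofReal_pos.2 hα).trans_le hv)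
  exact ⟨le_csInf ⟨w, hw⟩ hlower, csInf_le ⟨_, hlower⟩ hw⟩

lemma eventually_ofReal_le_measure_le {w : ℝ} (hX : IsCoboundedUnder (· ≥ ·) (ae P) X)
    (hw : essInf X P < w) : ∀ᶠ α in 𝓝[>] 0, ENNReal.ofReal α ≤ P {ω | X ω ≤ w} := by
  have hfreq : ∃ᶠ ω in ae P, X ω ≤ w := (frequently_lt_of_liminf_lt hX hw).mono fun _ => le_of_lt
  have hpos : 0 < P {ω | X ω ≤ w} := pos_iff_ne_zero.2 (frequently_ae_iff.1 hfreq)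
  have hlim : Tendsto ENNReal.ofReal (𝓝[>] 0) (𝓝 0) :=
    (ENNReal.continuous_ofReal.tendsto' 0 0 ENNReal.ofReal_zero).mono_left nhdsWithin_le_nhds
  exact (hlim.eventually_lt_const hpos).mono fun _ => le_of_lt

theorem tendsto_VaR_essInf (hbdd : IsBoundedUnder (· ≥ ·) (ae P) X)
    (hcobdd : IsCoboundedUnder (· ≥ ·) (ae P) X) :
    Tendsto (VaR P X) (𝓝[>] 0) (𝓝 (essInf X P)) := by
  have hIcc : ∀ w > essInf X P, ∀ᶠ α in 𝓝[>] 0, VaR P X α ∈ Icc (essInf X P) w := by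
    intro w hw
    filter_upwards [eventually_ofReal_le_measure_le hcobdd hw, self_mem_nhdsWithin] with α hαw hα
    exact VaR_mem_Icc_essInf hbdd hα hαw
  refine tendsto_order.2 ⟨fun a ha => ?_, fun b hb => ?_⟩
  · exact (hIcc _ (lt_add_one _)).mono fun _ hα => ha.trans_le hα.1
  · obtain ⟨w, hw, hwb⟩ := exists_between hb
    exact (hIcc w hw).mono fun _ hα => hα.2.trans_lt hwb

end VaR

section Support

variable {Ω E : Type*} [MeasurableSpace Ω] {P : Measure Ω} {Z : Ω → E} {D : Set E} {g : E → ℝ}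

lemma isBoundedUnder_ge_comp_of_ae_mem (hZ : ∀ᵐ ω ∂P, Z ω ∈ D) (hg : BddBelow (g '' D)) :
    IsBoundedUnder (· ≥ ·) (ae P) (fun ω => g (Z ω)) := by
  obtain ⟨b, hb⟩ := hg
  exact isBoundedUnder_of_eventually_ge (hZ.mono fun ω hω => hb (mem_image_of_mem g hω))

variable [TopologicalSpace E]

lemma frequently_comp_lt_of_mem_support
    (hsupp : ∀ U : Set E, IsOpen U → (U ∩ D).Nonempty → 0 < P {ω | Z ω ∈ U})
    (hg : UpperSemicontinuous g) {z : E} (hz : z ∈ D) {c : ℝ} (hc : g z < c) :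
    ∃ᶠ ω in ae P, g (Z ω) < c :=
  frequently_ae_iff.2 (hsupp (g ⁻¹' Iio c) (hg.isOpen_preimage c) ⟨z, hc, hz⟩).ne'

lemma isCoboundedUnder_ge_comp_of_support (hD : D.Nonempty)
    (hsupp : ∀ U : Set E, IsOpen U → (U ∩ D).Nonempty → 0 < P {ω | Z ω ∈ U})
    (hg : UpperSemicontinuous g) :
    IsCoboundedUnder (· ≥ ·) (ae P) (fun ω => g (Z ω)) := by
  obtain ⟨z, hz⟩ := hD
  have hfreq := frequently_comp_lt_of_mem_support hsupp hg hz (lt_add_one (g z))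
  exact IsCoboundedUnder.of_frequently_le (hfreq.mono fun _ => le_of_lt)

theorem essInf_comp_eq_sInf_image (hD : D.Nonempty) (hZ : ∀ᵐ ω ∂P, Z ω ∈ D)
    (hsupp : ∀ U : Set E, IsOpen U → (U ∩ D).Nonempty → 0 < P {ω | Z ω ∈ U})
    (hg : UpperSemicontinuous g) (hbdd : BddBelow (g '' D)) :
    essInf (fun ω => g (Z ω)) P = sInf (g '' D) := by
  apply le_antisymm
  · refine le_csInf (hD.image g) (forall_mem_image.2 fun z hz => ?_)
    refine le_of_forall_gt_imp_ge_of_dense fun c hc => ?_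
    have hfreq := frequently_comp_lt_of_mem_support hsupp hg hz hc
    exact liminf_le_of_frequently_le (hfreq.mono fun _ => le_of_lt)
      (isBoundedUnder_ge_comp_of_ae_mem hZ hbdd)
  · exact le_liminf_of_le (isCoboundedUnder_ge_comp_of_support hD hsupp hg)
      (hZ.mono fun ω hω => csInf_le hbdd (mem_image_of_mem g hω))

theorem stmt15_general (hD : D.Nonempty) (hZ : ∀ᵐ ω ∂P, Z ω ∈ D)
    (hsupp : ∀ U : Set E, IsOpen U → (U ∩ D).Nonempty → 0 < P {ω | Z ω ∈ U})
    (hg : UpperSemicontinuous g) (hbdd : BddBelow (g '' D)) :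
    Tendsto (VaR P fun ω => g (Z ω)) (𝓝[>] 0) (𝓝 (sInf (g '' D))) := by
  rw [← essInf_comp_eq_sInf_image hD hZ hsupp hg hbdd]
  exact tendsto_VaR_essInf (isBoundedUnder_ge_comp_of_ae_mem hZ hbdd)
    (isCoboundedUnder_ge_comp_of_support hD hsupp hg)

end Support

theorem stmt15 {Ω : Type*} [MeasurableSpace Ω] (P : Measure Ω)
    [IsProbabilityMeasure P] {dz dx : ℕ} (Z : Ω → (Fin dz → ℝ)) (hZ : Measurable Z)
    (Dz : Set (Fin dz → ℝ)) (hDz_ne : Dz.Nonempty) (hDz_cpt : IsCompact Dz)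
    (hDz_prob : P {ω | Z ω ∈ Dz} = 1)
    (hDz_supp : ∀ U : Set (Fin dz → ℝ), IsOpen U → (U ∩ Dz).Nonempty →
      0 < P {ω | Z ω ∈ U})
    (f : (Fin dx → ℝ) → (Fin dz → ℝ) → ℝ) (hf : Continuous (fun p : (Fin dx → ℝ) × (Fin dz → ℝ) => f p.1 p.2)) :
    ∀ x : Fin dx → ℝ,
      Filter.Tendsto (fun α => VaR P (fun ω => f x (Z ω)) α)
        (nhdsWithin 0 (Set.Ioi 0)) (nhds (sInf ((fun z => f x z) '' Dz))) := by
  intro x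
  have hfx : Continuous (f x) := hf.comp (.prodMk_right x)
  exact stmt15_general hDz_ne
    ((mem_ae_iff_prob_eq_one (hZ hDz_cpt.measurableSet)).2 hDz_prob) hDz_supp
    hfx.upperSemicontinuous (hDz_cpt.image hfx).bddBelow
end
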